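/- arXiv:2506.02693 — 2 statements merged into one kernel-verified Lean document; each statement's English description precedes it below -/
import Mathlib

section
/- Let M_0, M_1, …, M_g be positive integers, set e_i := gcd(M_0, …, M_i) and N_i := e_{i−1}/e_i for 1 ≤ i ≤ g, and assume N_i·M_i ∈ ⟨M_0, …, M_{i−1}⟩ for every 1 ≤ i ≤ g (i.e. the semigroup is free/telescopic). Then every element v of the additive submonoid ⟨M_0, …, M_g⟩ of ℕ has a unique representation v = Σ_{i=0}^{g} k_i M_i with k_0 ∈ ℕ and 0 ≤ k_i < N_i for 1 ≤ i ≤ g. -/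
/- STATEMENT 13: in a free (telescopic) numerical semigroup ⟨M_0, …, M_g⟩ with
e_i = gcd(M_0, …, M_i) and N_i = e_{i-1}/e_i, every element has a unique representation
Σ k_i M_i with k_0 ∈ ℕ and 0 ≤ k_i < N_i for 1 ≤ i ≤ g. -/

namespace CurvePaper

/-!
Let `N i` be the order of `M i` modulo the group generated by `M 0, …, M (i - 1)`, with `0` for
infinite order. In an expansion `∑ k i • M i` with reduced digits the last digit is determined
modulo its `N`, hence determined, and can be cancelled; conversely freeness says that a multiple
`N i • M i` can be carried over to the smaller generators, so any last coefficient can be reduced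
to its remainder modulo `N i`. For natural numbers the order of `M i` is
`gcd (M 0, …, M (i - 1)) / gcd (M 0, …, M i)`, which is `0 / M 0 = 0` at `i = 0`: this is why the
first coefficient is unrestricted.
-/

section AddCommMonoid

variable {A : Type*} [AddCommMonoid A]

/-- `N` divides the order of `m` modulo the group generated by `S`, the order being `0` if it is
infinite. Membership in that group is expressed by moving the negative parts to the other side, so
that `A` need not have subtraction. -/
def DvdAddOrderMod (N : ℕ) (m : A) (S : AddSubmonoid A) : Prop :=
  ∀ x ∈ S, ∀ y ∈ S, ∀ a b : ℕ, x + a • m = y + b • m → a ≡ b [MOD N]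

lemma sum_smul_mem_closure_image {ι : Type*} (M : ι → A) (k : ι → ℕ) (s : Finset ι) :
    ∑ i ∈ s, k i • M i ∈ AddSubmonoid.closure (M '' s) :=
  sum_mem fun i hi =>
    nsmul_mem (AddSubmonoid.subset_closure (Set.mem_image_of_mem M (Finset.mem_coe.2 hi))) (k i)

lemma mem_closure_image_Iio_succ {M : ℕ → A} {n : ℕ} {v : A} :
    v ∈ AddSubmonoid.closure (M '' Set.Iio (n + 1)) ↔
      ∃ w ∈ AddSubmonoid.closure (M '' Set.Iio n), ∃ a : ℕ, w + a • M n = v := by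
  rw [Set.Iio_add_one_eq_Iic, ← Set.Iio_insert, Set.image_insert_eq, Set.insert_eq, Set.union_comm,
    AddSubmonoid.closure_union, AddSubmonoid.mem_sup]
  simp only [AddSubmonoid.mem_closure_singleton, exists_exists_eq_and]

lemma exists_add_smul_eq_of_smul_mem {S : AddSubmonoid A} {N : ℕ} {m w : A}
    (hNm : N ≠ 0 → N • m ∈ S) (hw : w ∈ S) (a : ℕ) :
    ∃ w' ∈ S, ∃ r : ℕ, (N ≠ 0 → r < N) ∧ w' + r • m = w + a • m := by
  rcases eq_or_ne N 0 with rfl | hN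
  · exact ⟨w, hw, a, fun h => absurd rfl h, rfl⟩
  · refine ⟨w + (a / N) • N • m, add_mem hw (nsmul_mem (hNm hN) _), a % N,
      fun _ => Nat.mod_lt a hN.pos, ?_⟩
    rw [add_assoc, ← mul_nsmul, ← add_nsmul, Nat.div_add_mod]

lemma exists_reduced_expansion {M : ℕ → A} {N : ℕ → ℕ} {n : ℕ}
    (hfree : ∀ i, N i ≠ 0 → i < n → N i • M i ∈ AddSubmonoid.closure (M '' Set.Iio i))
    {v : A} (hv : v ∈ AddSubmonoid.closure (M '' Set.Iio n)) :
    ∃ k : ℕ → ℕ, (∀ i, n ≤ i → k i = 0) ∧ (∀ i, N i ≠ 0 → i < n → k i < N i) ∧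
      v = ∑ i ∈ Finset.range n, k i • M i := by
  induction n generalizing v with
  | zero => exact ⟨0, by simp, by simp, by simpa using hv⟩
  | succ n ih =>
    obtain ⟨w₀, hw₀, a, rfl⟩ := mem_closure_image_Iio_succ.1 hv
    obtain ⟨w, hw, r, hr, hwr⟩ :=
      exists_add_smul_eq_of_smul_mem (fun hN => hfree n hN n.lt_succ_self) hw₀ a
    obtain ⟨k, hk_zero, hk_lt, rfl⟩ := ih (fun i hN hi => hfree i hN (hi.trans n.lt_succ_self)) hw
    refine ⟨Function.update k n r, fun i hi => ?_, fun i hN hi => ?_, ?_⟩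
    · rw [Function.update_of_ne (by lia), hk_zero i (by lia)]
    · rcases Nat.lt_succ_iff_lt_or_eq.1 hi with hi | rfl
      · rw [Function.update_of_ne hi.ne]
        exact hk_lt i hN hi
      · rw [Function.update_self]
        exact hr hN
    · rw [← hwr, Finset.sum_range_succ, Function.update_self]
      congr 1
      refine Finset.sum_congr rfl fun i hi => ?_
      rw [Function.update_of_ne (Finset.mem_range.1 hi).ne]

end AddCommMonoid

section AddCancelCommMonoid

variable {A : Type*} [AddCancelCommMonoid A]

lemma eq_of_modEq_of_reduced {N a b : ℕ} (h : a ≡ b [MOD N]) (ha : N ≠ 0 → a < N)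
    (hb : N ≠ 0 → b < N) : a = b := by
  rcases eq_or_ne N 0 with rfl | hN
  · exact Nat.modEq_zero_iff.1 h
  · exact h.eq_of_lt_of_lt (ha hN) (hb hN)

lemma reduced_expansion_unique {M : ℕ → A} {N : ℕ → ℕ} {n : ℕ}
    (horder : ∀ i < n, DvdAddOrderMod (N i) (M i) (AddSubmonoid.closure (M '' Set.Iio i)))
    {k l : ℕ → ℕ} (hk : ∀ i, N i ≠ 0 → i < n → k i < N i) (hl : ∀ i, N i ≠ 0 → i < n → l i < N i)
    (hkl : ∑ i ∈ Finset.range n, k i • M i = ∑ i ∈ Finset.range n, l i • M i) :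
    ∀ i < n, k i = l i := by
  induction n with
  | zero => simp
  | succ n ih =>
    rw [Finset.sum_range_succ, Finset.sum_range_succ] at hkl
    have hmem : ∀ c : ℕ → ℕ,
        ∑ i ∈ Finset.range n, c i • M i ∈ AddSubmonoid.closure (M '' Set.Iio n) := fun c => by
      rw [← Finset.coe_range]
      exact sum_smul_mem_closure_image M c _
    have hmod : k n ≡ l n [MOD N n] :=
      horder n n.lt_succ_self _ (hmem k) _ (hmem l) _ _ hkl
    have hlast : k n = l n :=
      eq_of_modEq_of_reduced hmod (fun hN => hk n hN n.lt_succ_self)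
        (fun hN => hl n hN n.lt_succ_self)
    rw [hlast] at hkl
    have hinit : ∀ i < n, k i = l i :=
      ih (fun i hi => horder i (by lia)) (fun i hN hi => hk i hN (by lia))
        (fun i hN hi => hl i hN (by lia)) (add_right_cancel hkl)
    intro i hi
    rcases Nat.lt_succ_iff_lt_or_eq.1 hi with hi | rfl
    exacts [hinit i hi, hlast]

theorem statement13_general (g : ℕ) (M : ℕ → A) (N : ℕ → ℕ)
    (horder : ∀ i ≤ g, DvdAddOrderMod (N i) (M i) (AddSubmonoid.closure (M '' Set.Iio i)))
    (hfree : ∀ i, N i ≠ 0 → i ≤ g → N i • M i ∈ AddSubmonoid.closure (M '' Set.Iio i)) :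
    ∀ v ∈ AddSubmonoid.closure (M '' Set.Iic g),
      ∃! k : ℕ → ℕ,
        (∀ i, g < i → k i = 0) ∧ (∀ i, N i ≠ 0 → i ≤ g → k i < N i) ∧
        v = ∑ i ∈ Finset.range (g + 1), k i • M i := by
  simp only [← Nat.lt_add_one_iff] at horder hfree ⊢
  intro v hv
  rw [← Set.Iio_add_one_eq_Iic] at hv
  obtain ⟨k, hk_zero, hk_lt, hk_sum⟩ := exists_reduced_expansion hfree hv
  refine ⟨k, ⟨hk_zero, hk_lt, hk_sum⟩, ?_⟩
  rintro l ⟨hl_zero, hl_lt, hl_sum⟩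
  funext i
  rcases lt_or_ge i (g + 1) with hi | hi
  · exact reduced_expansion_unique horder hl_lt hk_lt (hl_sum.symm.trans hk_sum) i hi
  · rw [hk_zero i hi, hl_zero i hi]

end AddCancelCommMonoid

section GcdRatio

/-- The ratio `N_i = e_{i-1} / e_i` of consecutive gcds, where `e_i = gcd(M_0, …, M_i)`. At `i = 0`
the numerator is the gcd of the empty family, so `gcdRatio M 0 = 0`. -/
def gcdRatio (M : ℕ → ℕ) (i : ℕ) : ℕ :=
  (Finset.range i).gcd M / (Finset.range (i + 1)).gcd M

lemma gcd_range_succ (M : ℕ → ℕ) (i : ℕ) :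
    (Finset.range (i + 1)).gcd M = ((Finset.range i).gcd M).gcd (M i) := by
  rw [Finset.range_add_one, Finset.gcd_insert, gcd_comm]
  rfl

lemma gcd_range_pos {M : ℕ → ℕ} (h₀ : 0 < M 0) {n : ℕ} (hn : 1 ≤ n) :
    0 < (Finset.range n).gcd M :=
  Nat.pos_of_dvd_of_pos (Finset.gcd_dvd (Finset.mem_range.2 hn)) h₀

lemma gcdRatio_ne_zero_iff {M : ℕ → ℕ} (h₀ : 0 < M 0) {i : ℕ} : gcdRatio M i ≠ 0 ↔ 1 ≤ i := by
  constructor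
  · contrapose!
    intro hi
    simp [gcdRatio, Nat.lt_one_iff.1 hi]
  · intro hi
    have he : 0 < (Finset.range i).gcd M := gcd_range_pos h₀ hi
    rw [gcdRatio, gcd_range_succ]
    exact (Nat.div_pos (Nat.gcd_le_left _ he) (Nat.gcd_pos_of_pos_left _ he)).ne'

lemma gcd_dvd_of_mem_closure_image {ι : Type*} {M : ι → ℕ} {s : Finset ι} {x : ℕ}
    (hx : x ∈ AddSubmonoid.closure (M '' s)) : s.gcd M ∣ x := by
  induction hx using AddSubmonoid.closure_induction with
  | mem x hx =>
    obtain ⟨i, hi, rfl⟩ := hx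
    exact Finset.gcd_dvd hi
  | zero => exact dvd_zero _
  | add x y _ _ hx hy => exact dvd_add hx hy

lemma modEq_div_gcd_of_mul_modEq_mul {m a b c : ℕ} (hmc : 0 < m.gcd c)
    (h : a * c ≡ b * c [MOD m]) : a ≡ b [MOD m / m.gcd c] := by
  rcases m.eq_zero_or_pos with rfl | hm
  · rw [Nat.gcd_zero_left] at hmc
    rw [Nat.zero_div, Nat.modEq_zero_iff]
    exact Nat.eq_of_mul_eq_mul_right hmc (Nat.modEq_zero_iff.1 h)
  · exact h.cancel_right_div_gcd hm

lemma dvdAddOrderMod_gcdRatio {M : ℕ → ℕ} (h₀ : 0 < M 0) (i : ℕ) :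
    DvdAddOrderMod (gcdRatio M i) (M i) (AddSubmonoid.closure (M '' Set.Iio i)) := by
  intro x hx y hy a b hxy
  rw [← Finset.coe_range] at hx hy
  have hmod_xy : x ≡ y [MOD (Finset.range i).gcd M] :=
    (Nat.modEq_zero_iff_dvd.2 (gcd_dvd_of_mem_closure_image hx)).trans
      (Nat.modEq_zero_iff_dvd.2 (gcd_dvd_of_mem_closure_image hy)).symm
  have hmod_mul : a * M i ≡ b * M i [MOD (Finset.range i).gcd M] :=
    hmod_xy.add_left_cancel (congrArg (· % _) hxy)
  have he : 0 < (Finset.range (i + 1)).gcd M := gcd_range_pos h₀ i.succ_pos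
  rw [gcd_range_succ] at he
  rw [gcdRatio, gcd_range_succ]
  exact modEq_div_gcd_of_mul_modEq_mul he hmod_mul

end GcdRatio

/-- Unique representation of the elements of a free numerical semigroup.  Here
`(Finset.range (i+1)).gcd M` is `e_i = gcd(M_0, …, M_i)` and
`(Finset.range i).gcd M / (Finset.range (i+1)).gcd M` is `N_i = e_{i-1}/e_i`. -/
theorem statement13 (g : ℕ) (M : ℕ → ℕ) (hpos : ∀ i ≤ g, 0 < M i)
    (hfree : ∀ i, 1 ≤ i → i ≤ g →
      ((Finset.range i).gcd M / (Finset.range (i + 1)).gcd M) * M i ∈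
        AddSubmonoid.closure (M '' Set.Iio i)) :
    ∀ v ∈ AddSubmonoid.closure (M '' Set.Iic g),
      ∃! k : ℕ → ℕ,
        (∀ i, g < i → k i = 0) ∧
        (∀ i, 1 ≤ i → i ≤ g →
          k i < (Finset.range i).gcd M / (Finset.range (i + 1)).gcd M) ∧
        v = ∑ i ∈ Finset.range (g + 1), k i * M i := by
  simp only [← gcdRatio_ne_zero_iff (hpos 0 g.zero_le)] at hfree ⊢
  exact statement13_general g M _ (fun i _ => dvdAddOrderMod_gcdRatio (hpos 0 g.zero_le) i) hfree

end CurvePaper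
end

section
/- Let M_0, M_1, …, M_g be positive integers, set e_i := gcd(M_0, …, M_i) and N_i := e_{i−1}/e_i for 1 ≤ i ≤ g, and assume N_i·M_i ∈ ⟨M_0, …, M_{i−1}⟩ for every 1 ≤ i ≤ g. Then for the semigroup S := ⟨M_0, …, M_g⟩ the identity (Σ_{v ∈ S} t^v) · ∏_{i=0}^{g} (1 − t^{M_i}) = ∏_{i=1}^{g} (1 − t^{N_i M_i}) holds in ℤ[[t]]. -/
/-!
The product formula telescopes: adjoining `m = M_k` to `S = ⟨M_0, …, M_{k-1}⟩` multiplies the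
generating series by `(1 - t^{N m}) / (1 - t^m)`, where `N = N_k`. To see this, note that for
`a ∈ S` the product `(Σ_{v ∈ S} t^v) (1 - t^a)` is the generating series of the Apéry set
`S \ (a + S)`; so the claim is that the Apéry set of `⟨S, m⟩` at `m` is the Apéry set of `S` at
`N m`. An element `s + j m` of `⟨S, m⟩` lies outside `m + ⟨S, m⟩` only if `j = 0`, and it lies in
`S` only if `N ∣ j`, since `e_{k-1}` divides every element of `S`.
-/

namespace CurvePaper

open PowerSeries

section AperySet

variable {A : Type*} [AddCommMonoid A]

/-- The Apéry set of a submonoid `S` at `a`: the elements of `S` that do not lie in `S + a`. It is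
stated without subtraction, so that `A` can be any additive commutative monoid. -/
def aperySet (S : AddSubmonoid A) (a : A) : Set A :=
  S \ (· + a) '' S

theorem mem_aperySet {S : AddSubmonoid A} {a v : A} :
    v ∈ aperySet S a ↔ v ∈ S ∧ ∀ u ∈ S, u + a ≠ v := by
  simp [aperySet]

theorem mem_sup_multiples {S : AddSubmonoid A} {m v : A} :
    v ∈ S ⊔ AddSubmonoid.multiples m ↔ ∃ s ∈ S, ∃ j : ℕ, s + j • m = v := by
  simp [AddSubmonoid.mem_sup, AddSubmonoid.mem_multiples_iff]

theorem aperySet_sup_multiples {S : AddSubmonoid A} {m : A} {N : ℕ} (hN : 0 < N)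
    (hmem : N • m ∈ S) (hdvd : ∀ s ∈ S, ∀ j : ℕ, s + j • m ∈ S → N ∣ j) :
    aperySet (S ⊔ AddSubmonoid.multiples m) m = aperySet S (N • m) := by
  ext v
  simp only [mem_aperySet, mem_sup_multiples]
  constructor
  · rintro ⟨⟨s, hs, j, rfl⟩, hv⟩
    obtain rfl : j = 0 := by
      by_contra hj
      obtain ⟨i, rfl⟩ := Nat.exists_eq_succ_of_ne_zero hj
      exact hv _ ⟨s, hs, i, rfl⟩ (by rw [succ_nsmul, add_assoc])
    refine ⟨by simpa using hs, fun u hu huv ↦ hv _ ⟨u, hu, N - 1, rfl⟩ ?_⟩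
    rw [add_assoc, ← succ_nsmul, Nat.sub_add_cancel hN, huv]
  · rintro ⟨hvS, hv⟩
    refine ⟨⟨v, hvS, 0, by simp⟩, ?_⟩
    rintro _ ⟨s, hs, j, rfl⟩ rfl
    rw [add_assoc, ← succ_nsmul] at hvS hv
    obtain ⟨q, hq⟩ := hdvd s hs (j + 1) hvS
    obtain ⟨p, rfl⟩ : ∃ p, q = p + 1 := Nat.exists_eq_succ_of_ne_zero (by rintro rfl; simp at hq)
    refine hv (s + p • N • m) (S.add_mem hs (S.nsmul_mem hmem p)) ?_
    rw [add_assoc, ← succ_nsmul, hq, mul_nsmul]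

theorem aperySet_multiples_self {m : ℕ} (hm : 0 < m) :
    aperySet (AddSubmonoid.multiples m) m = {0} := by
  ext v
  simp only [mem_aperySet, AddSubmonoid.mem_multiples_iff, Set.mem_singleton_iff]
  constructor
  · rintro ⟨⟨_ | j, rfl⟩, hv⟩
    · exact zero_nsmul m
    · exact absurd (succ_nsmul m j).symm (hv _ ⟨j, rfl⟩)
  · rintro rfl
    exact ⟨⟨0, zero_nsmul m⟩, fun u _ ↦ by lia⟩

end AperySet

section IndicatorSeries

/-- The generating series `Σ_{v ∈ A} t^v` of a set `A` of natural numbers. -/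
noncomputable def indicatorSeries (R : Type*) [Semiring R] (A : Set ℕ) : R⟦X⟧ :=
  PowerSeries.mk (A.indicator 1)

theorem indicatorSeries_singleton_zero (R : Type*) [Semiring R] :
    indicatorSeries R {0} = 1 := by
  ext n
  simp [indicatorSeries, coeff_one, Pi.single_apply]

theorem indicatorSeries_mul_X_pow (R : Type*) [Semiring R] (A : Set ℕ) (a : ℕ) :
    indicatorSeries R A * X ^ a = indicatorSeries R ((· + a) '' A) := by
  ext n
  rw [coeff_mul_X_pow', indicatorSeries, indicatorSeries, coeff_mk, coeff_mk]
  split_ifs with han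
  · obtain ⟨k, rfl⟩ := Nat.exists_eq_add_of_le' han
    rw [Nat.add_sub_cancel, Set.indicator_image (add_left_injective a)]
    rfl
  · refine (Set.indicator_of_notMem ?_ _).symm
    rintro ⟨k, -, rfl⟩
    exact han (Nat.le_add_left a k)

variable (R : Type*) [Ring R]

theorem indicatorSeries_sdiff {A B : Set ℕ} (hBA : B ⊆ A) :
    indicatorSeries R (A \ B) = indicatorSeries R A - indicatorSeries R B := by
  ext n
  simp only [indicatorSeries, coeff_mk, map_sub]
  exact congrFun (Set.indicator_sdiff hBA 1) n

theorem indicatorSeries_mul_one_sub_X_pow {S : AddSubmonoid ℕ} {a : ℕ} (ha : a ∈ S) :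
    indicatorSeries R (S : Set ℕ) * (1 - X ^ a) = indicatorSeries R (aperySet S a) := by
  have hsub : (· + a) '' (S : Set ℕ) ⊆ S := Set.image_subset_iff.2 fun _ hu ↦ S.add_mem hu ha
  rw [mul_sub, mul_one, indicatorSeries_mul_X_pow, aperySet, indicatorSeries_sdiff R hsub]

theorem indicatorSeries_multiples_mul {m : ℕ} (hm : 0 < m) :
    indicatorSeries R (AddSubmonoid.multiples m : Set ℕ) * (1 - X ^ m) = 1 := by
  rw [indicatorSeries_mul_one_sub_X_pow R (AddSubmonoid.mem_multiples m),
    aperySet_multiples_self hm, indicatorSeries_singleton_zero]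

theorem indicatorSeries_sup_multiples_mul {S : AddSubmonoid ℕ} {e m : ℕ} (he : 0 < e)
    (hdvd : ∀ s ∈ S, e ∣ s) (hmem : e / e.gcd m * m ∈ S) :
    indicatorSeries R (S ⊔ AddSubmonoid.multiples m : AddSubmonoid ℕ) * (1 - X ^ m) =
      indicatorSeries R (S : Set ℕ) * (1 - X ^ (e / e.gcd m * m)) := by
  have hm : m ∈ S ⊔ AddSubmonoid.multiples m :=
    AddSubmonoid.mem_sup_right (AddSubmonoid.mem_multiples m)
  have hdvd_of_mem : ∀ s ∈ S, ∀ j : ℕ, s + j • m ∈ S → e / e.gcd m ∣ j := fun s hs j hsj ↦ by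
    have hejm : e ∣ j * m := (Nat.dvd_add_right (hdvd s hs)).1 (hdvd _ hsj)
    rw [Nat.div_dvd_iff_dvd_mul (Nat.gcd_dvd_left e m) (Nat.gcd_pos_of_pos_left m he)]
    exact Nat.dvd_gcd_mul_iff_dvd_mul.2 (mul_comm j m ▸ hejm)
  rw [indicatorSeries_mul_one_sub_X_pow R hm, indicatorSeries_mul_one_sub_X_pow R hmem,
    aperySet_sup_multiples (Nat.div_gcd_pos_of_pos_left m he) hmem hdvd_of_mem, smul_eq_mul]

end IndicatorSeries

theorem closure_image_Iic {ι A : Type*} [PartialOrder ι] [AddMonoid A] (f : ι → A) (a : ι) :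
    AddSubmonoid.closure (f '' Set.Iic a) =
      AddSubmonoid.closure (f '' Set.Iio a) ⊔ AddSubmonoid.multiples (f a) := by
  rw [← Set.Iio_insert, Set.image_insert_eq, Set.insert_eq, AddSubmonoid.closure_union, sup_comm,
    AddSubmonoid.multiples_eq_closure]

theorem gcd_dvd_of_mem_closure {ι α : Type*} [CommSemiring α] [NormalizedGCDMonoid α]
    {s : Finset ι} {f : ι → α} {v : α} (hv : v ∈ AddSubmonoid.closure (f '' s)) : s.gcd f ∣ v := by
  induction hv using AddSubmonoid.closure_induction with
  | mem _ hx =>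
    obtain ⟨i, hi, rfl⟩ := hx
    exact Finset.gcd_dvd hi
  | zero => exact dvd_zero _
  | add _ _ _ _ hx hy => exact dvd_add hx hy

theorem indicatorSeries_closure_Iic_mul (R : Type*) [Ring R] {M : ℕ → ℕ} {k : ℕ}
    (he : 0 < (Finset.range k).gcd M)
    (hmem : (Finset.range k).gcd M / (Finset.range (k + 1)).gcd M * M k ∈
      AddSubmonoid.closure (M '' Set.Iio k)) :
    indicatorSeries R (AddSubmonoid.closure (M '' Set.Iic k)) * (1 - X ^ M k) =
      indicatorSeries R (AddSubmonoid.closure (M '' Set.Iio k)) *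
        (1 - X ^ ((Finset.range k).gcd M / (Finset.range (k + 1)).gcd M * M k)) := by
  have hgcd : (Finset.range (k + 1)).gcd M = ((Finset.range k).gcd M).gcd (M k) := by
    rw [Finset.range_add_one, Finset.gcd_insert, gcd_comm, gcd_eq_nat_gcd]
  rw [closure_image_Iic, hgcd]
  rw [hgcd] at hmem
  refine indicatorSeries_sup_multiples_mul R he (fun s hs ↦ gcd_dvd_of_mem_closure ?_) hmem
  rwa [Finset.coe_range]

theorem statement14_general (R : Type*) [CommRing R] (g : ℕ) (M : ℕ → ℕ) (hpos : 0 < M 0)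
    (hfree : ∀ i, 1 ≤ i → i ≤ g →
      ((Finset.range i).gcd M / (Finset.range (i + 1)).gcd M) * M i ∈
        AddSubmonoid.closure (M '' Set.Iio i)) :
    indicatorSeries R (AddSubmonoid.closure (M '' Set.Iic g)) *
      ∏ i ∈ Finset.range (g + 1), (1 - X ^ M i) =
    ∏ i ∈ Finset.Icc 1 g,
      (1 - X ^ ((Finset.range i).gcd M / (Finset.range (i + 1)).gcd M * M i)) := by
  induction g with
  | zero =>
    simpa [closure_image_Iic] using indicatorSeries_multiples_mul R hpos
  | succ k ih =>
    have he : 0 < (Finset.range (k + 1)).gcd M :=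
      Nat.pos_of_dvd_of_pos (Finset.gcd_dvd (Finset.mem_range.2 k.succ_pos)) hpos
    have hstep := indicatorSeries_closure_Iic_mul R he (hfree (k + 1) k.succ_pos le_rfl)
    rw [Set.Iio_add_one_eq_Iic] at hstep
    rw [Finset.prod_range_succ, mul_left_comm, hstep, Finset.prod_Icc_succ_top k.succ_pos,
      ← ih fun i hi hik ↦ hfree i hi (hik.trans k.le_succ)]
    ring

open Classical in
/-- Here `(Finset.range (i+1)).gcd M` is `e_i = gcd(M_0, …, M_i)` and
`(Finset.range i).gcd M / (Finset.range (i+1)).gcd M` is `N_i = e_{i-1}/e_i`. -/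
theorem statement14 (g : ℕ) (M : ℕ → ℕ) (hpos : ∀ i ≤ g, 0 < M i)
    (hfree : ∀ i, 1 ≤ i → i ≤ g →
      ((Finset.range i).gcd M / (Finset.range (i + 1)).gcd M) * M i ∈
        AddSubmonoid.closure (M '' Set.Iio i)) :
    (PowerSeries.mk fun v =>
        if v ∈ AddSubmonoid.closure (M '' Set.Iic g) then (1 : ℤ) else 0) *
      ∏ i ∈ Finset.range (g + 1), (1 - (PowerSeries.X : PowerSeries ℤ) ^ (M i)) =
    ∏ i ∈ Finset.Icc 1 g,
      (1 - (PowerSeries.X : PowerSeries ℤ) ^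
        (((Finset.range i).gcd M / (Finset.range (i + 1)).gcd M) * M i)) :=
  statement14_general ℤ g M (hpos 0 g.zero_le) hfree

end CurvePaper
end
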